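/- Let τ2 ≥ τ1 ≥ 0 and ρ > 0. The switched system ẋ(t) = f_{σ(t)}(x(t)) is uniformly exponentially stable with decay ρ (ρ-UES) on the class S_dw(τ1,τ2) if and only if it is ρ-UES on the class S*_dw(τ1,τ2). -/

import Mathlib

open Filter Set
open scoped Classical

noncomputable section

/-- A switching signal `σ : [0,∞) → {1,…,M}` (piecewise constant, right continuous),
encoded by the (possibly finite) strictly increasing sequence of its switching instants
`T 1 < T 2 < …` (the discontinuity points, with the convention `T 0 = 0`, and `num` the
extended-natural number of switching instants) together with the value `idx k ∈ Fin M`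
taken on the `k`-th inter-switching interval `[T k, T (k+1))`. Beyond the last switching
instant the time sequence is frozen, and if there are infinitely many switching instants
they tend to `+∞`. At each switching instant the value actually changes. -/
structure Signal (M : ℕ) where
  idx : ℕ → Fin M
  T : ℕ → ℝ
  num : ℕ∞
  T0 : T 0 = 0
  mono : ∀ k : ℕ, T k ≤ T (k + 1)
  strict : ∀ k : ℕ, (k : ℕ∞) < num → T k < T (k + 1)
  frozen : ∀ k : ℕ, num ≤ (k : ℕ∞) → T (k + 1) = T k
  change : ∀ k : ℕ, (k : ℕ∞) < num → idx k ≠ idx (k + 1)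
  unbounded : num = ⊤ → Tendsto T atTop atTop

/-- The index of the inter-switching interval containing time `t`. -/
def Signal.seg {M : ℕ} (s : Signal M) (t : ℝ) : ℕ :=
  sSup {k : ℕ | (k : ℕ∞) ≤ s.num ∧ s.T k ≤ t}

/-- Given the flow maps `Φ i` of the subsystems, the state of the switched system at the
`k`-th switching instant, starting from `x` at time `0`. -/
def Signal.state {M : ℕ} {E : Type*} (Φ : Fin M → ℝ → E → E) (s : Signal M) (x : E) : ℕ → E
  | 0 => x
  | k + 1 =>
    if (k : ℕ∞) < s.num then
      Φ (s.idx k) (s.T (k + 1) - s.T k) (Signal.state Φ s x k)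
    else Signal.state Φ s x k

/-- The solution `Φ_σ(t,x)` of the switched system associated to the flow maps `Φ i` of the
subsystems, for the switching signal `s`, starting at `x` (at time `0`), evaluated at time `t`. -/
def Signal.sol {M : ℕ} {E : Type*} (Φ : Fin M → ℝ → E → E) (s : Signal M) (t : ℝ) (x : E) : E :=
  Φ (s.idx (s.seg t)) (t - s.T (s.seg t)) (Signal.state Φ s x (s.seg t))

/-- The class `S_dw(τ1,τ2)`: switching signals with `τ1 ≤ t_k − t_{k−1} ≤ τ2` for every
switching instant `t_k > 0`. -/
def Sdw (M : ℕ) (τ1 τ2 : ℝ) : Set (Signal M) :=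
  {s | ∀ k : ℕ, (k : ℕ∞) < s.num →
    τ1 ≤ s.T (k + 1) - s.T k ∧ s.T (k + 1) - s.T k ≤ τ2}

/-- The class `S*_dw(τ1,τ2)`: switching signals with `τ1 ≤ t_{k+1} − t_k ≤ τ2` for every
switching instant `t_k > 0`, and with `t_1 ≤ τ2`. -/
def SdwStar (M : ℕ) (τ1 τ2 : ℝ) : Set (Signal M) :=
  {s | (∀ k : ℕ, 1 ≤ k → (k : ℕ∞) < s.num →
      τ1 ≤ s.T (k + 1) - s.T k ∧ s.T (k + 1) - s.T k ≤ τ2) ∧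
    (1 ≤ s.num → s.T 1 ≤ τ2)}

/-- A function `α : [0,∞) → [0,∞)` of class `K∞`: continuous, vanishing at `0`,
strictly increasing and unbounded. -/
def ClassKInf (α : ℝ → ℝ) : Prop :=
  ContinuousOn α (Ici 0) ∧ α 0 = 0 ∧ StrictMonoOn α (Ici 0) ∧
    Tendsto α atTop atTop ∧ ∀ r ∈ Ici (0 : ℝ), 0 ≤ α r

/-- A function `β : [0,∞) × [0,∞) → [0,∞)` of class `KL`. -/
def ClassKL (β : ℝ → ℝ → ℝ) : Prop :=
  ContinuousOn (Function.uncurry β) (Ici 0 ×ˢ Ici 0) ∧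
  (∀ s ∈ Ici (0 : ℝ), β 0 s = 0 ∧ StrictMonoOn (fun r => β r s) (Ici 0)) ∧
  (∀ r ∈ Ici (0 : ℝ), AntitoneOn (β r) (Ici 0) ∧ Tendsto (β r) atTop (nhds 0)) ∧
  (∀ r ∈ Ici (0 : ℝ), ∀ s ∈ Ici (0 : ℝ), 0 ≤ β r s)

/-- Global uniform asymptotic stability (GUAS) of the switched system with subsystem flows
`Φ i` over the class `S` of switching signals. -/
def GUAS {M : ℕ} {E : Type*} [NormedAddCommGroup E] (Φ : Fin M → ℝ → E → E)
    (S : Set (Signal M)) : Prop :=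
  ∃ β : ℝ → ℝ → ℝ, ClassKL β ∧
    ∀ s ∈ S, ∀ x : E, ∀ t ≥ (0 : ℝ), ‖Signal.sol Φ s t x‖ ≤ β ‖x‖ t

/-- Uniform exponential stability with decay `ρ` (`ρ`-UES) of the switched system with
subsystem flows `Φ i` over the class `S` of switching signals. -/
def UES {M : ℕ} {E : Type*} [NormedAddCommGroup E] (ρ : ℝ) (Φ : Fin M → ℝ → E → E)
    (S : Set (Signal M)) : Prop :=
  ∃ C : ℝ, 0 ≤ C ∧ ∀ s ∈ S, ∀ x : E, ∀ t ≥ (0 : ℝ),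
    ‖Signal.sol Φ s t x‖ ≤ C * Real.exp (-ρ * t) * ‖x‖

theorem Signal.seg_isGreatest {M : ℕ} (s : Signal M) (t : ℝ) (ht : 0 ≤ t) :
    IsGreatest {k : ℕ | (k : ℕ∞) ≤ s.num ∧ s.T k ≤ t} (s.seg t) := by
  have hne : {k : ℕ | (k : ℕ∞) ≤ s.num ∧ s.T k ≤ t}.Nonempty :=
    ⟨0, by simp, by rw [s.T0]; exact ht⟩
  have hb : BddAbove {k : ℕ | (k : ℕ∞) ≤ s.num ∧ s.T k ≤ t} := by
    by_cases h : s.num = ⊤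
    · obtain ⟨N, hN⟩ := (tendsto_atTop.1 (s.unbounded h) (t + 1)).exists_forall_of_atTop
      refine ⟨N, fun k hk => ?_⟩
      by_contra hlt
      have := hN k (by omega)
      have := hk.2
      linarith
    · obtain ⟨m, hm⟩ := ENat.ne_top_iff_exists.1 h
      refine ⟨m, fun k hk => ?_⟩
      have := hk.1
      rw [← hm] at this
      exact_mod_cast this
  exact ⟨Nat.sSup_mem hne hb, fun k hk => le_csSup hb hk⟩

theorem Signal.seg_eq {M : ℕ} (s : Signal M) (t : ℝ) (k : ℕ)
    (h : IsGreatest {k : ℕ | (k : ℕ∞) ≤ s.num ∧ s.T k ≤ t} k) : s.seg t = k := h.csSup_eq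

/-- The constant signal. -/
def Signal.const {M : ℕ} (i : Fin M) : Signal M where
  idx _ := i
  T _ := 0
  num := 0
  T0 := rfl
  mono _ := le_rfl
  strict k hk := by simp at hk
  frozen _ _ := rfl
  change k hk := by simp at hk
  unbounded h := by simp at h

theorem lt_pred_iff (n : ℕ∞) (k : ℕ) : (k : ℕ∞) < n - 1 ↔ ((k + 1 : ℕ) : ℕ∞) < n := by
  induction n using ENat.recTopCoe with
  | top => simp
  | coe m =>
    have : ((m : ℕ∞) - 1) = ((m - 1 : ℕ) : ℕ∞) := by simp
    rw [this, Nat.cast_lt, Nat.cast_lt]; omega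

theorem le_pred_iff (n : ℕ∞) (hn : 1 ≤ n) (k : ℕ) :
    (k : ℕ∞) ≤ n - 1 ↔ ((k + 1 : ℕ) : ℕ∞) ≤ n := by
  induction n using ENat.recTopCoe with
  | top => simp
  | coe m =>
    have : ((m : ℕ∞) - 1) = ((m - 1 : ℕ) : ℕ∞) := by simp
    have h1 : 1 ≤ m := by exact_mod_cast hn
    rw [this, Nat.cast_le, Nat.cast_le]; omega

/-- The signal shifted by its first switching instant. -/
def Signal.shift {M : ℕ} (s : Signal M) : Signal M where
  idx k := s.idx (k + 1)
  T k := s.T (k + 1) - s.T 1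
  num := s.num - 1
  T0 := by simp
  mono k := by have := s.mono (k + 1); linarith
  strict k hk := by
    have := s.strict (k + 1) ((lt_pred_iff _ _).1 hk); linarith
  frozen k hk := by
    have := s.frozen (k + 1) (not_lt.1 fun h => absurd ((lt_pred_iff _ _).2 h) (not_lt.2 hk))
    linarith
  change k hk := s.change (k + 1) ((lt_pred_iff _ _).1 hk)
  unbounded h := by
    have h2 : s.num = ⊤ := by
      by_contra hne
      obtain ⟨m, hm⟩ := ENat.ne_top_iff_exists.1 hne
      have h3 : (m : ℕ∞) < s.num - 1 := by rw [h]; exact ENat.coe_lt_top m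
      rw [lt_pred_iff, ← hm, Nat.cast_lt] at h3
      omega
    exact tendsto_atTop_add_const_right _ (-s.T 1)
      ((tendsto_add_atTop_iff_nat 1).2 (s.unbounded h2))

theorem Signal.state_shift {M : ℕ} {E : Type*} (Φ : Fin M → ℝ → E → E) (s : Signal M)
    (hs : 1 ≤ s.num) (x : E) (k : ℕ) :
    s.state Φ x (k + 1) = s.shift.state Φ (Φ (s.idx 0) (s.T 1) x) k := by
  induction k with
  | zero =>
    have : ((0 : ℕ) : ℕ∞) < s.num := by
      simpa using lt_of_lt_of_le zero_lt_one hs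
    simp only [Signal.state, if_pos this, zero_add, s.T0, sub_zero]
  | succ k ih =>
    rw [Signal.state, ih, Signal.state]
    have : s.shift.T (k + 1) - s.shift.T k = s.T (k + 1 + 1) - s.T (k + 1) := by
      simp [Signal.shift]
    rw [this]
    have h2 : ((k : ℕ) : ℕ∞) < s.shift.num ↔ ((k + 1 : ℕ) : ℕ∞) < s.num := lt_pred_iff _ _
    simp only [h2]
    rfl

theorem Signal.seg_shift {M : ℕ} (s : Signal M) (hs : 1 ≤ s.num) (t : ℝ) (ht : s.T 1 ≤ t) :
    s.seg t = s.shift.seg (t - s.T 1) + 1 := by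
  obtain ⟨⟨h1, h2⟩, h3⟩ := s.shift.seg_isGreatest (t - s.T 1) (by linarith)
  apply Signal.seg_eq
  refine ⟨⟨(le_pred_iff _ hs _).1 h1, ?_⟩, ?_⟩
  · have : s.T (s.shift.seg (t - s.T 1) + 1) - s.T 1 ≤ t - s.T 1 := h2
    linarith
  · rintro (_ | k) ⟨hk1, hk2⟩
    · omega
    · have : k ≤ s.shift.seg (t - s.T 1) := h3 ⟨(le_pred_iff _ hs _).2 hk1, by
        change s.T (k + 1) - s.T 1 ≤ _
        linarith⟩
      omega

theorem Signal.sol_shift {M : ℕ} {E : Type*} (Φ : Fin M → ℝ → E → E) (s : Signal M)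
    (hs : 1 ≤ s.num) (x : E) (t : ℝ) (ht : s.T 1 ≤ t) :
    s.sol Φ t x = s.shift.sol Φ (t - s.T 1) (Φ (s.idx 0) (s.T 1) x) := by
  rw [Signal.sol, Signal.sol, s.seg_shift hs t ht, s.state_shift Φ hs]
  have : ∀ k, t - s.T 1 - s.shift.T k = t - s.T (k + 1) := by
    intro k; simp [Signal.shift]
  rw [this]
  rfl

theorem Signal.sol_first {M : ℕ} {E : Type*} (Φ : Fin M → ℝ → E → E) (s : Signal M)
    (x : E) (t : ℝ) (h0 : 0 ≤ t) (ht : t < s.T 1 ∨ s.num = 0) :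
    s.sol Φ t x = Φ (s.idx 0) t x := by
  have : s.seg t = 0 := by
    apply Signal.seg_eq
    refine ⟨⟨by simp, by rw [s.T0]; exact h0⟩, ?_⟩
    rintro k ⟨hk1, hk2⟩
    rcases ht with ht | ht
    · by_contra hk
      have := monotone_nat_of_le_succ s.mono (show 1 ≤ k by omega)
      linarith
    · rw [ht] at hk1
      exact_mod_cast hk1
  rw [Signal.sol, this, s.T0, sub_zero]
  rfl

/-- Lemma 1, exponential case: for `τ2 ≥ τ1 ≥ 0` and `ρ > 0`, the
switched system is `ρ`-UES on `S_dw(τ1,τ2)` if and only if it is `ρ`-UES on `S*_dw(τ1,τ2)`. -/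
theorem ues_Sdw_iff_ues_SdwStar {n M : ℕ}
    (f : Fin M → EuclideanSpace ℝ (Fin n) → EuclideanSpace ℝ (Fin n))
    (Φ : Fin M → ℝ → EuclideanSpace ℝ (Fin n) → EuclideanSpace ℝ (Fin n))
    (hlip : ∀ i, LocallyLipschitz (f i))
    (hf0 : ∀ i, f i 0 = 0)
    (hΦ0 : ∀ i x, Φ i 0 x = x)
    (hode : ∀ i x t, HasDerivAt (fun τ => Φ i τ x) (f i (Φ i t x)) t)
    (huniq : ∀ i (γ : ℝ → EuclideanSpace ℝ (Fin n)),
        (∀ t, HasDerivAt γ (f i (γ t)) t) → ∀ t, γ t = Φ i t (γ 0))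
    (τ1 τ2 : ℝ) (hτ1 : 0 ≤ τ1) (hτ12 : τ1 ≤ τ2) (ρ : ℝ) (hρ : 0 < ρ) :
    UES ρ Φ (Sdw M τ1 τ2) ↔ UES ρ Φ (SdwStar M τ1 τ2) := by
  constructor
  · rintro ⟨C, hC, h⟩
    have hc : ∀ i x t, 0 ≤ t → ‖Φ i t x‖ ≤ C * Real.exp (-ρ * t) * ‖x‖ := by
      intro i x t ht
      have h1 := h (Signal.const i) (by intro k hk; simp [Signal.const] at hk) x t ht
      rwa [Signal.sol_first Φ _ x t ht (Or.inr rfl)] at h1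
    refine ⟨C + C * C, by positivity, ?_⟩
    intro s hs x t ht
    have key : t < s.T 1 ∨ s.num = 0 → 
        ‖Signal.sol Φ s t x‖ ≤ (C + C * C) * Real.exp (-ρ * t) * ‖x‖ := by
      intro hh
      rw [Signal.sol_first Φ s x t ht hh]
      refine (hc _ x t ht).trans ?_
      gcongr
      nlinarith
    by_cases hn : s.num = 0
    · exact key (Or.inr hn)
    by_cases hlt : t < s.T 1
    · exact key (Or.inl hlt)
    have hT : s.T 1 ≤ t := not_lt.1 hlt
    have hs1 : 1 ≤ s.num := ENat.one_le_iff_ne_zero.2 hn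
    have hT0 : 0 ≤ s.T 1 := by have := s.mono 0; rw [s.T0] at this; simpa using this
    rw [Signal.sol_shift Φ s hs1 x t hT]
    have hmem : s.shift ∈ Sdw M τ1 τ2 := by
      intro k hk
      have := hs.1 (k + 1) (by omega) ((lt_pred_iff _ _).1 hk)
      simpa [Signal.shift] using this
    have e : Real.exp (-ρ * t) = Real.exp (-ρ * (t - s.T 1)) * Real.exp (-ρ * s.T 1) := by
      rw [← Real.exp_add]; ring_nf
    calc _ ≤ C * Real.exp (-ρ * (t - s.T 1)) * ‖Φ (s.idx 0) (s.T 1) x‖ :=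
          h _ hmem _ _ (by linarith)
      _ ≤ C * Real.exp (-ρ * (t - s.T 1)) * (C * Real.exp (-ρ * s.T 1) * ‖x‖) := by
          gcongr
          exact hc _ _ _ hT0
      _ = (C * C) * Real.exp (-ρ * t) * ‖x‖ := by rw [e]; ring
      _ ≤ _ := by
          gcongr
          linarith
  · rintro ⟨C, hC, h⟩
    refine ⟨C, hC, fun s hs => h s ⟨fun k _ hk => hs k hk, fun h1 => ?_⟩⟩
    have := (hs 0 (by simpa using lt_of_lt_of_le zero_lt_one h1)).2
    rw [s.T0] at this
    simpa using this
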